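/- Let ≤ be the horizontal-strip relation on partitions. Suppose β assigns to every pair of partitions μ ≤ λ an element β(μ,λ) ∈ ℂ^× satisfying the 1-cocycle condition β(ν,λ) = β(μ,λ)·β(ν,μ) for every chain ν ≤ μ ≤ λ. Then there is a function γ from the set of all partitions to ℂ^× with β(μ,λ) = γ(λ)·γ(μ)^{−1} for all pairs μ ≤ λ. (Equivalently, the first cohomology of the nerve of the set of partitions with the horizontal-strip relation, with coefficients in ℂ^×, is trivial.) -/

import Mathlib

/-- `λ/μ` is a horizontal strip: `μ ⊆ λ` and `λ_{i+1} ≤ μ_i` for all i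
(rows are 0-indexed, so `rowLen i` is the (i+1)-st part). -/
def YoungDiagram.IsHStrip (lam μ : YoungDiagram) : Prop :=
  μ ≤ lam ∧ ∀ i : ℕ, lam.rowLen (i + 1) ≤ μ.rowLen i

/-- `λ/μ` is a vertical strip: `μ ⊆ λ` and `λ_i − μ_i ≤ 1` for all i. -/
def YoungDiagram.IsVStrip (lam μ : YoungDiagram) : Prop :=
  μ ≤ lam ∧ ∀ i : ℕ, lam.rowLen i ≤ μ.rowLen i + 1
/-- The horizontal-strip relation on partitions: `μ ≤ λ` iff `μ ⊆ λ` and λ/μ is a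
horizontal strip. -/
def YoungDiagram.hsLE (μ lam : YoungDiagram) : Prop := lam.IsHStrip μ

/-!
Let `T λ = (λ₂, λ₃, …)`. The horizontal-strip relation says that `λ` and `μ` interlace, so `μ ≤ λ`
implies `T λ ≤ μ`, which in turn implies `T μ ≤ T λ`. Splitting `β(T λ, λ)` through `μ` and
`β(T μ, μ)` through `T λ` yields `β(μ, λ) β(T μ, μ) = β(T λ, λ) β(T μ, T λ)`. Iterating, `β(μ, λ)`
is the quotient of the products of `β` along `λ, T λ, T² λ, …` and `μ, T μ, T² μ, …`, both of which
reach the empty partition, where `β = 1`.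
-/

section Cocycle

variable {α M G : Type*} [Monoid M] [Group G] {R : α → α → Prop} {b : α → α → M} {T : α → α} {o : α}

/-- A `1`-cocycle on the nerve of the (not necessarily transitive) relation `R`, with values in a
possibly noncommutative monoid; the condition is imposed on pairwise related triples only. -/
def IsCocycle (R : α → α → Prop) (b : α → α → M) : Prop :=
  ∀ x y z, R x y → R x z → R y z → b x z = b y z * b x y

/-- The product of `b` along the first `n` steps of the orbit `x, T x, T (T x), …`, each step being
read as the pair `(T y, y)`. For large `n` it is the primitive of a cocycle `b`. -/
def orbitProd (b : α → α → M) (T : α → α) : ℕ → α → M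
  | 0, _ => 1
  | n + 1, x => b (T x) x * orbitProd b T n (T x)

lemma orbitProd_add (m n : ℕ) (x : α) :
    orbitProd b T (m + n) x = orbitProd b T m x * orbitProd b T n (T^[m] x) := by
  induction m generalizing x with
  | zero => simp [orbitProd]
  | succ m ih => rw [Nat.succ_add, orbitProd, ih, orbitProd, mul_assoc, Function.iterate_succ_apply]

lemma orbitProd_eq_one_of_isFixedPt (ho : Function.IsFixedPt T o) (hb : b o o = 1) (n : ℕ) :
    orbitProd b T n o = 1 := by
  induction n with
  | zero => rfl
  | succ n ih => rw [orbitProd, ho.eq, hb, ih, one_mul]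

lemma orbitProd_eq_of_iterate_eq (ho : Function.IsFixedPt T o) (hb : b o o = 1) {m n : ℕ} {x : α}
    (hmn : m ≤ n) (hx : T^[m] x = o) : orbitProd b T n x = orbitProd b T m x := by
  obtain ⟨k, rfl⟩ := Nat.exists_eq_add_of_le hmn
  rw [orbitProd_add, hx, orbitProd_eq_one_of_isFixedPt ho hb, mul_one]

namespace IsCocycle

lemma apply_self {b : α → α → G} (hb : IsCocycle R b) {x : α} (hx : R x x) : b x x = 1 :=
  left_eq_mul.1 (hb x x x hx hx hx)

lemma mul_apply_map_self (hb : IsCocycle R b) (hR : ∀ x, R x x)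
    (hT : ∀ x y, R x y → R (T y) x) {x y : α} (hxy : R x y) :
    b x y * b (T x) x = b (T y) y * b (T x) (T y) := by
  have hyx : R (T y) x := hT x y hxy
  have through_x : b (T y) y = b x y * b (T y) x := hb _ _ _ hyx (hT y y (hR y)) hxy
  have through_Ty : b (T x) x = b (T y) x * b (T x) (T y) :=
    hb _ _ _ (hT _ _ hyx) (hT x x (hR x)) hyx
  rw [through_x, through_Ty, mul_assoc]

lemma mul_orbitProd (hb : IsCocycle R b) (hR : ∀ x, R x x)
    (hT : ∀ x y, R x y → R (T y) x) (n : ℕ) {x y : α} (hxy : R x y) :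
    b x y * orbitProd b T n x = orbitProd b T n y * b (T^[n] x) (T^[n] y) := by
  induction n generalizing x y with
  | zero => simp [orbitProd]
  | succ n ih =>
    calc b x y * orbitProd b T (n + 1) x
        = b (T y) y * (b (T x) (T y) * orbitProd b T n (T x)) := by
          rw [orbitProd, ← mul_assoc, hb.mul_apply_map_self hR hT hxy, mul_assoc]
      _ = orbitProd b T (n + 1) y * b (T^[n + 1] x) (T^[n + 1] y) := by
          rw [ih (hT _ _ (hT _ _ hxy)), orbitProd, mul_assoc, Function.iterate_succ_apply,
            Function.iterate_succ_apply]

theorem exists_eq_mul_inv {b : α → α → G} (hb : IsCocycle R b) (hR : ∀ x, R x x)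
    (hT : ∀ x y, R x y → R (T y) x) (ho : Function.IsFixedPt T o)
    (hreach : ∀ x, ∃ n, T^[n] x = o) :
    ∃ g : α → G, ∀ x y, R x y → b x y = g y * (g x)⁻¹ := by
  choose N hN using hreach
  have hoo : b o o = 1 := hb.apply_self (hR o)
  refine ⟨fun x => orbitProd b T (N x) x, fun x y hxy => eq_mul_inv_of_mul_eq ?_⟩
  have iterate_eq {z : α} {n : ℕ} (hn : N z ≤ n) : T^[n] z = o := by
    rw [← Nat.sub_add_cancel hn, Function.iterate_add_apply, hN, ho.iterate]
  have hx : N x ≤ max (N x) (N y) := le_max_left _ _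
  have hy : N y ≤ max (N x) (N y) := le_max_right _ _
  calc b x y * orbitProd b T (N x) x
      = b x y * orbitProd b T (max (N x) (N y)) x := by
        rw [orbitProd_eq_of_iterate_eq ho hoo hx (hN x)]
    _ = orbitProd b T (max (N x) (N y)) y := by
        rw [hb.mul_orbitProd hR hT _ hxy, iterate_eq hx, iterate_eq hy, hoo, mul_one]
    _ = orbitProd b T (N y) y := orbitProd_eq_of_iterate_eq ho hoo hy (hN y)

end IsCocycle

end Cocycle

section HorizontalStrip

open YoungDiagram

lemma youngDiagram_le_iff_rowLen_le {μ lam : YoungDiagram} :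
    μ ≤ lam ↔ ∀ i, μ.rowLen i ≤ lam.rowLen i := by
  refine ⟨fun h i => le_of_forall_lt fun j hj => ?_, fun h ⟨i, j⟩ hij => ?_⟩
  · exact mem_iff_lt_rowLen.1 (h (mem_iff_lt_rowLen.2 hj))
  · exact mem_iff_lt_rowLen.2 ((mem_iff_lt_rowLen.1 hij).trans_le (h i))

lemma hsLE_iff_rowLen {μ lam : YoungDiagram} :
    μ.hsLE lam ↔ ∀ i, μ.rowLen i ≤ lam.rowLen i ∧ lam.rowLen (i + 1) ≤ μ.rowLen i := by
  rw [hsLE, IsHStrip, youngDiagram_le_iff_rowLen_le, forall_and]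

lemma hsLE_refl (lam : YoungDiagram) : lam.hsLE lam :=
  ⟨le_rfl, fun i => lam.rowLen_anti _ _ i.le_succ⟩

/-- The partition `(λ₂, λ₃, …)` obtained from `λ = (λ₁, λ₂, …)` by deleting its first part: the
cells below the first row, moved up by one. -/
noncomputable def removeFirstRow (lam : YoungDiagram) : YoungDiagram where
  cells := lam.cells.preimage (Prod.map Nat.succ id)
    (Nat.succ_injective.prodMap Function.injective_id).injOn
  isLowerSet := by
    rw [Finset.coe_preimage]
    exact lam.isLowerSet.preimage (Order.succ_mono.prodMap monotone_id)

lemma mem_removeFirstRow {lam : YoungDiagram} {i j : ℕ} :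
    (i, j) ∈ removeFirstRow lam ↔ (i + 1, j) ∈ lam :=
  Finset.mem_preimage (hf := (Nat.succ_injective.prodMap Function.injective_id).injOn)

lemma rowLen_removeFirstRow (lam : YoungDiagram) (i : ℕ) :
    (removeFirstRow lam).rowLen i = lam.rowLen (i + 1) :=
  eq_of_forall_lt_iff fun j => by
    rw [← mem_iff_lt_rowLen, ← mem_iff_lt_rowLen, mem_removeFirstRow]

lemma mem_iterate_removeFirstRow {lam : YoungDiagram} {n i j : ℕ} :
    (i, j) ∈ removeFirstRow^[n] lam ↔ (i + n, j) ∈ lam := by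
  induction n generalizing lam with
  | zero => rfl
  | succ n ih => rw [Function.iterate_succ_apply, ih, mem_removeFirstRow, add_assoc]

lemma removeFirstRow_bot : removeFirstRow ⊥ = ⊥ :=
  le_bot_iff.1 fun _ hc => (notMem_bot _ (mem_removeFirstRow.1 hc)).elim

lemma iterate_removeFirstRow_colLen_zero (lam : YoungDiagram) :
    removeFirstRow^[lam.colLen 0] lam = ⊥ := by
  refine le_bot_iff.1 fun ⟨i, j⟩ hij => ?_
  have hcell : (i + lam.colLen 0, 0) ∈ lam :=
    lam.up_left_mem le_rfl j.zero_le (mem_iterate_removeFirstRow.1 hij)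
  exact absurd (mem_iff_lt_colLen.1 hcell) (Nat.le_add_left _ _).not_gt

lemma removeFirstRow_hsLE_of_hsLE {μ lam : YoungDiagram} (h : μ.hsLE lam) :
    (removeFirstRow lam).hsLE μ := by
  rw [hsLE_iff_rowLen] at h ⊢
  intro i
  rw [rowLen_removeFirstRow]
  exact ⟨(h i).2, (h (i + 1)).1⟩

end HorizontalStrip

theorem hstrip_nerve_H1_trivial_general {G : Type*} [Group G]
    (b : YoungDiagram → YoungDiagram → G) (hb : IsCocycle YoungDiagram.hsLE b) :
    ∃ g : YoungDiagram → G,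
      ∀ μ lam : YoungDiagram, μ.hsLE lam → b μ lam = g lam * (g μ)⁻¹ :=
  hb.exists_eq_mul_inv hsLE_refl (fun _ _ => removeFirstRow_hsLE_of_hsLE) removeFirstRow_bot
    fun lam => ⟨lam.colLen 0, iterate_removeFirstRow_colLen_zero lam⟩

/-- Every 1-cocycle on the nerve of the set of partitions with the
horizontal-strip relation, with values in ℂ^×, is a coboundary: H¹ of the nerve is
trivial. -/
theorem hstrip_nerve_H1_trivial
    (b : YoungDiagram → YoungDiagram → ℂˣ)
    (hcoc : ∀ ν μ lam : YoungDiagram, ν.hsLE μ → ν.hsLE lam → μ.hsLE lam →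
      b ν lam = b μ lam * b ν μ) :
    ∃ g : YoungDiagram → ℂˣ,
      ∀ μ lam : YoungDiagram, μ.hsLE lam → b μ lam = g lam * (g μ)⁻¹ :=
  hstrip_nerve_H1_trivial_general b hcoc
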